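/- Let G be a simple graph on n vertices with adjacency eigenvalues μ₁ ≥ … ≥ μ_n, and let j denote the number of indices i with −1 < μ_i < 0. Then n⁻(Ḡ) ≥ n⁺(G) + n⁰(G) + j − 1; equivalently, n⁻(Ḡ) ≥ #{i : μ_i > −1} − 1. -/

import Mathlib

/-!
Write `A` and `B` for the adjacency matrices of `G` and `Gᶜ`, so that `1 + A + B` is the all-ones
matrix, whose quadratic form is `x ↦ (∑ i, x i) ^ 2`. If the inequality failed, a dimension count
would give a vector `x ≠ 0` that is orthogonal to the eigenvectors of `A` with eigenvalue `≤ -1`,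
orthogonal to the eigenvectors of `B` with negative eigenvalue, and has coordinate sum `0`. Expanding
in the two eigenbases (`dotProduct_mulVec_eq_sum`), such an `x` satisfies `xᵀ(1 + A)x > 0` and
`xᵀBx ≥ 0`, which contradicts `xᵀ(1 + A + B)x = 0`.
-/

open Matrix

/-- The adjacency matrix of a simple graph, viewed over `ℝ`, is Hermitian. -/
lemma SimpleGraph.adjMatrix_isHermitian {n : ℕ} (G : SimpleGraph (Fin n))
    [DecidableRel G.Adj] : (G.adjMatrix ℝ).IsHermitian := by
  rw [Matrix.IsHermitian, conjTranspose_eq_transpose_of_trivial]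
  exact G.isSymm_adjMatrix

/-- `n⁺(G)`: the number of positive eigenvalues (with multiplicity) of the adjacency
matrix of `G`. -/
noncomputable def SimpleGraph.posInertia {n : ℕ} (G : SimpleGraph (Fin n)) : ℕ :=
  letI := Classical.decRel G.Adj
  (Finset.univ.filter fun i => 0 < G.adjMatrix_isHermitian.eigenvalues i).card

/-- `n⁰(G)`: the number of zero eigenvalues (with multiplicity) of the adjacency
matrix of `G`. -/
noncomputable def SimpleGraph.zeroInertia {n : ℕ} (G : SimpleGraph (Fin n)) : ℕ :=
  letI := Classical.decRel G.Adj
  (Finset.univ.filter fun i => G.adjMatrix_isHermitian.eigenvalues i = 0).card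

/-- `n⁻(G)`: the number of negative eigenvalues (with multiplicity) of the adjacency
matrix of `G`. -/
noncomputable def SimpleGraph.negInertia {n : ℕ} (G : SimpleGraph (Fin n)) : ℕ :=
  letI := Classical.decRel G.Adj
  (Finset.univ.filter fun i => G.adjMatrix_isHermitian.eigenvalues i < 0).card

/-- The quadratic form of a real symmetric matrix, diagonalised in its eigenbasis. -/
lemma dotProduct_mulVec_eq_sum {n : ℕ} {A : Matrix (Fin n) (Fin n) ℝ} (hA : A.IsHermitian)
    (x : EuclideanSpace ℝ (Fin n)) :
    x.ofLp ⬝ᵥ (A *ᵥ x.ofLp) =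
      ∑ i, hA.eigenvalues i * (inner ℝ (hA.eigenvectorBasis i) x) ^ 2 := by
  have key : ∀ i, inner ℝ (hA.eigenvectorBasis i) (WithLp.toLp 2 (A *ᵥ x.ofLp)) =
      hA.eigenvalues i * inner ℝ (hA.eigenvectorBasis i) x := by
    intro i
    have hT : Aᵀ = A := by
      rw [← conjTranspose_eq_transpose_of_trivial]
      exact hA
    simp only [EuclideanSpace.inner_eq_star_dotProduct, star_trivial]
    rw [dotProduct_comm, dotProduct_mulVec, ← mulVec_transpose, hT, hA.mulVec_eigenvectorBasis,
      smul_dotProduct, smul_eq_mul, dotProduct_comm]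
  have h := hA.eigenvectorBasis.sum_inner_mul_inner x (WithLp.toLp 2 (A *ᵥ x.ofLp))
  rw [EuclideanSpace.inner_eq_star_dotProduct, star_trivial, dotProduct_comm] at h
  rw [← h]
  refine Finset.sum_congr rfl fun i _ => ?_
  rw [key, real_inner_comm]
  ring

lemma dotProduct_self_eq_sum {n : ℕ} {A : Matrix (Fin n) (Fin n) ℝ} (hA : A.IsHermitian)
    (x : EuclideanSpace ℝ (Fin n)) :
    x.ofLp ⬝ᵥ x.ofLp = ∑ i, (inner ℝ (hA.eigenvectorBasis i) x) ^ 2 := by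
  have h := hA.eigenvectorBasis.sum_inner_mul_inner x x
  rw [EuclideanSpace.inner_eq_star_dotProduct, star_trivial] at h
  rw [← h]
  refine Finset.sum_congr rfl fun i _ => ?_
  rw [real_inner_comm]
  ring

/-- If `1 + A + B` is the all-ones matrix, then all but at most one of the eigenvalues of `A`
exceeding `-1` are accounted for by negative eigenvalues of `B`. -/
lemma card_eigenvalues_le {n : ℕ} {A B : Matrix (Fin n) (Fin n) ℝ} (hA : A.IsHermitian)
    (hB : B.IsHermitian) (hAB : 1 + A + B = of 1) :
    (Finset.univ.filter fun i => -1 < hA.eigenvalues i).card ≤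
      (Finset.univ.filter fun i => hB.eigenvalues i < 0).card + 1 := by
  by_contra! hlt
  let f : EuclideanSpace ℝ (Fin n) →ₗ[ℝ]
      ({i // ¬ -1 < hA.eigenvalues i} → ℝ) × ({i // hB.eigenvalues i < 0} → ℝ) × ℝ :=
    (LinearMap.pi fun i => innerₛₗ ℝ (hA.eigenvectorBasis i.1)).prod
      ((LinearMap.pi fun i => innerₛₗ ℝ (hB.eigenvectorBasis i.1)).prod
        (innerₛₗ ℝ (WithLp.toLp 2 (1 : Fin n → ℝ))))
  have hker : LinearMap.ker f ≠ ⊥ := by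
    apply LinearMap.ker_ne_bot_of_finrank_lt
    have hc := Fintype.card_subtype_compl (fun i => -1 < hA.eigenvalues i)
    have hle := Fintype.card_subtype_le (fun i => -1 < hA.eigenvalues i)
    rw [← Fintype.card_subtype, ← Fintype.card_subtype] at hlt
    simp only [Module.finrank_prod, Module.finrank_fintype_fun_eq_card, finrank_euclideanSpace,
      Module.finrank_self]
    omega
  obtain ⟨x, hx, hx0⟩ := (Submodule.ne_bot_iff _).1 hker
  rw [LinearMap.mem_ker] at hx
  have h1 : ∀ i, ¬ -1 < hA.eigenvalues i → inner ℝ (hA.eigenvectorBasis i) x = 0 :=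
    fun i hi => congrFun (congrArg Prod.fst hx) ⟨i, hi⟩
  have h2 : ∀ i, hB.eigenvalues i < 0 → inner ℝ (hB.eigenvectorBasis i) x = 0 :=
    fun i hi => congrFun (congrArg (fun p => p.2.1) hx) ⟨i, hi⟩
  have h3 : inner ℝ (WithLp.toLp 2 (1 : Fin n → ℝ)) x = 0 :=
    congrArg (fun p => p.2.2) hx
  have hBx : 0 ≤ x.ofLp ⬝ᵥ (B *ᵥ x.ofLp) := by
    rw [dotProduct_mulVec_eq_sum hB]
    refine Finset.sum_nonneg fun i _ => ?_
    by_cases hi : hB.eigenvalues i < 0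
    · simp [h2 i hi]
    · exact mul_nonneg (not_lt.1 hi) (sq_nonneg _)
  have hAx : 0 < x.ofLp ⬝ᵥ x.ofLp + x.ofLp ⬝ᵥ (A *ᵥ x.ofLp) := by
    rw [dotProduct_mulVec_eq_sum hA, dotProduct_self_eq_sum hA, ← Finset.sum_add_distrib]
    obtain ⟨k, hk⟩ : ∃ k, inner ℝ (hA.eigenvectorBasis k) x ≠ 0 := by
      by_contra! h
      refine hx0 ?_
      rw [← hA.eigenvectorBasis.sum_repr' x]
      simp [h]
    have hterm : ∀ i, inner ℝ (hA.eigenvectorBasis i) x ≠ 0 →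
        0 < inner ℝ (hA.eigenvectorBasis i) x ^ 2 +
          hA.eigenvalues i * inner ℝ (hA.eigenvectorBasis i) x ^ 2 := by
      intro i hi
      have : -1 < hA.eigenvalues i := by_contra fun h => hi (h1 i h)
      have := mul_pos (by linarith : 0 < 1 + hA.eigenvalues i) (sq_pos_of_ne_zero hi)
      linarith
    refine Finset.sum_pos' (fun i _ => ?_) ⟨k, Finset.mem_univ k, hterm k hk⟩
    by_cases hi : inner ℝ (hA.eigenvectorBasis i) x = 0
    · simp [hi]
    · exact (hterm i hi).le
  have hJ : x.ofLp ⬝ᵥ ((1 + A + B) *ᵥ x.ofLp) = 0 := by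
    rw [EuclideanSpace.inner_eq_star_dotProduct, star_trivial, dotProduct_one] at h3
    have : (of 1 : Matrix (Fin n) (Fin n) ℝ) *ᵥ x.ofLp = 0 := by
      ext i
      simpa [mulVec, dotProduct] using h3
    rw [hAB, this, dotProduct_zero]
  rw [add_mulVec, add_mulVec, one_mulVec, dotProduct_add, dotProduct_add] at hJ
  linarith

/-- For a graph `G` on `n` vertices, letting `j` be the number of adjacency eigenvalues
`μ` of `G` (with multiplicity) satisfying `-1 < μ < 0`, we have
`n⁻(Ḡ) ≥ n⁺(G) + n⁰(G) + j - 1`. -/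
theorem negInertia_compl_ge {n : ℕ} (G : SimpleGraph (Fin n)) [DecidableRel G.Adj]
    (j : ℕ)
    (hj : j = (Finset.univ.filter fun i =>
      -1 < G.adjMatrix_isHermitian.eigenvalues i ∧
        G.adjMatrix_isHermitian.eigenvalues i < 0).card) :
    G.posInertia + G.zeroInertia + j - 1 ≤ Gᶜ.negInertia := by
  classical
  have hp : G.posInertia =
      (Finset.univ.filter fun i => 0 < G.adjMatrix_isHermitian.eigenvalues i).card := by
    unfold SimpleGraph.posInertia
    congr!
  have hz : G.zeroInertia =
      (Finset.univ.filter fun i => G.adjMatrix_isHermitian.eigenvalues i = 0).card := by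
    unfold SimpleGraph.zeroInertia
    congr!
  have hn : Gᶜ.negInertia =
      (Finset.univ.filter fun i => Gᶜ.adjMatrix_isHermitian.eigenvalues i < 0).card := by
    unfold SimpleGraph.negInertia
    congr!
  have hAB : 1 + G.adjMatrix ℝ + Gᶜ.adjMatrix ℝ = of 1 := by
    rw [← G.compl_adjMatrix_eq_adjMatrix_compl ℝ]
    exact G.one_add_adjMatrix_add_compl_adjMatrix_eq_of_one ℝ
  have hmain := card_eigenvalues_le G.adjMatrix_isHermitian Gᶜ.adjMatrix_isHermitian hAB
  have hsplit : (Finset.univ.filter fun i => 0 < G.adjMatrix_isHermitian.eigenvalues i).card +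
      (Finset.univ.filter fun i => G.adjMatrix_isHermitian.eigenvalues i = 0).card + j =
      (Finset.univ.filter fun i => -1 < G.adjMatrix_isHermitian.eigenvalues i).card := by
    rw [hj, ← Finset.card_union_of_disjoint, ← Finset.card_union_of_disjoint]
    · congr 1
      ext i
      simp only [Finset.mem_union, Finset.mem_filter, Finset.mem_univ, true_and]
      grind
    · rw [Finset.disjoint_left]
      intro i
      simp only [Finset.mem_union, Finset.mem_filter, Finset.mem_univ, true_and]
      grind
    · rw [Finset.disjoint_left]
      intro i
      simp only [Finset.mem_filter, Finset.mem_univ, true_and]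
      grind
  omega
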